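/- In the N-player (n,m)-Bingo game with fixed cards c_1,…,c_N, for every k with 1 ≤ k ≤ m·n the probability that the game ends exactly at the k-th call satisfies P(B_N = k) = Σ_{∅ ≠ Y ⊆ 𝓛_N} (−1)^{|Y|+1} · C(k−1, m(Y)−1) / C(m·n, m(Y)), where C(a,b) denotes the binomial coefficient. -/

import Mathlib

open Finset

/-- The row of an `n × n` Bingo board through index `i`. -/
def bingoRow (n : ℕ) (i : Fin n) : Finset (Fin n × Fin n) :=
  Finset.univ.filter (fun s => s.1 = i)

/-- The column of an `n × n` Bingo board through index `j`. -/
def bingoCol (n : ℕ) (j : Fin n) : Finset (Fin n × Fin n) :=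
  Finset.univ.filter (fun s => s.2 = j)

/-- The main diagonal `{(i,i)}`. -/
def bingoDiag (n : ℕ) : Finset (Fin n × Fin n) :=
  Finset.univ.filter (fun s => (s.2 : ℕ) = (s.1 : ℕ))

/-- The anti-diagonal `{(i, n-1-i)}`. -/
def bingoAntiDiag (n : ℕ) : Finset (Fin n × Fin n) :=
  Finset.univ.filter (fun s => (s.2 : ℕ) = n - 1 - (s.1 : ℕ))

/-- The set `𝓛` of winning lines: `n` rows, `n` columns and the two diagonals. -/
def bingoLines (n : ℕ) : Finset (Finset (Fin n × Fin n)) :=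
  (Finset.univ.image (bingoRow n)) ∪ (Finset.univ.image (bingoCol n)) ∪
    {bingoDiag n, bingoAntiDiag n}

/-- An `(n,m)`-Bingo card: an injective assignment of numbers such that column `j`
only uses numbers in `[m*j, m*(j+1))`. -/
def IsBingoCard (n m : ℕ) (c : Fin n × Fin n → Fin (m * n)) : Prop :=
  Function.Injective c ∧
    ∀ i j : Fin n, m * (j : ℕ) ≤ (c (i, j) : ℕ) ∧ (c (i, j) : ℕ) < m * ((j : ℕ) + 1)

/-- Bingo is achieved within the first `k` calls of `σ`: some winning line has all of its
numbers among `σ 0, …, σ (k-1)`. -/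
def BingoWins (n m : ℕ) (c : Fin n × Fin n → Fin (m * n))
    (σ : Equiv.Perm (Fin (m * n))) (k : ℕ) : Prop :=
  ∃ L ∈ bingoLines n, ∀ s ∈ L, ∃ t : Fin (m * n), (t : ℕ) < k ∧ σ t = c s

/-- `S_n = ∑_{∅ ≠ X ⊆ 𝓛} (-1)^{|X|+1} / (m(X)+1)`, where `m(X)` is the number of squares
covered by the union of the lines in `X`. -/
noncomputable def Sn (n : ℕ) : ℝ :=
  ∑ X ∈ (bingoLines n).powerset.filter (fun X => X.Nonempty),
    (-1 : ℝ) ^ (X.card + 1) / (((X.sup id).card : ℝ) + 1)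

/-- The set `𝓛_N` of distinct number-sets of winning lines across the `N` cards. -/
def bingoLinesN (n m N : ℕ) (c : Fin N → Fin n × Fin n → Fin (m * n)) :
    Finset (Finset (Fin (m * n))) :=
  ((Finset.univ : Finset (Fin N)) ×ˢ bingoLines n).image
    (fun q => q.2.image (c q.1))

/-- Some number-set in `𝓛_N` is contained among the first `k` calls of `σ`. -/
def BingoWinsN (n m N : ℕ) (c : Fin N → Fin n × Fin n → Fin (m * n))
    (σ : Equiv.Perm (Fin (m * n))) (k : ℕ) : Prop :=
  ∃ A ∈ bingoLinesN n m N c, ∀ x ∈ A, ∃ t : Fin (m * n), (t : ℕ) < k ∧ σ t = x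

/-- `S_{n,N}` for a fixed realization of the `N` cards. -/
noncomputable def SnN (n m N : ℕ) (c : Fin N → Fin n × Fin n → Fin (m * n)) : ℝ :=
  ∑ Y ∈ (bingoLinesN n m N c).powerset.filter (fun Y => Y.Nonempty),
    (-1 : ℝ) ^ (Y.card + 1) / (((Y.sup id).card : ℝ) + 1)

/-- permutations whose first `k` values cover `T` -/
def cover (E k : ℕ) (T : Finset (Fin E)) : Finset (Equiv.Perm (Fin E)) :=
  Finset.univ.filter (fun σ => ∀ x ∈ T, ((σ.symm x : Fin E) : ℕ) < k)

lemma cover_card_eq (E k : ℕ) (T T' : Finset (Fin E)) (h : T.card = T'.card) :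
    (cover E k T).card = (cover E k T').card := by
  classical
  have e : {x // x ∈ T} ≃ {x // x ∈ T'} := Finset.equivOfCardEq h
  let τ : Equiv.Perm (Fin E) := Equiv.extendSubtype e
  have h1 : ∀ x, x ∈ T → τ x ∈ T' := fun x hx => Equiv.extendSubtype_mem e x hx
  have h2 : ∀ x, x ∉ T → τ x ∉ T' := fun x hx => Equiv.extendSubtype_not_mem e x hx
  refine Finset.card_bij' (fun σ _ => σ.trans τ) (fun σ _ => σ.trans τ.symm) ?_ ?_ ?_ ?_
  · intro σ hσ
    simp only [cover, mem_filter, mem_univ, true_and, Equiv.symm_trans_apply] at hσ ⊢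
    intro x hx
    apply hσ
    by_contra hh
    exact h2 _ hh (by simpa using hx)
  · intro σ hσ
    simp only [cover, mem_filter, mem_univ, true_and, Equiv.symm_trans_apply,
      Equiv.symm_symm] at hσ ⊢
    intro x hx
    exact hσ _ (h1 x hx)
  · intro σ _
    ext x
    simp
  · intro σ _
    ext x
    simp

lemma cover_mul (E k : ℕ) (hk : k ≤ E) (T : Finset (Fin E)) :
    E.choose T.card * (cover E k T).card = E.factorial * k.choose T.card := by
  classical
  have h1 : ∑ T' ∈ (Finset.univ : Finset (Fin E)).powersetCard T.card, (cover E k T').card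
      = E.choose T.card * (cover E k T).card := by
    rw [Finset.sum_congr rfl (fun T' hT' => cover_card_eq E k T' T
      (Finset.mem_powersetCard.1 hT').2)]
    simp
  rw [← h1]
  have h2 := Finset.sum_card_bipartiteAbove_eq_sum_card_bipartiteBelow
    (s := (Finset.univ : Finset (Fin E)).powersetCard T.card)
    (t := (Finset.univ : Finset (Equiv.Perm (Fin E))))
    (fun T' σ => ∀ x ∈ T', ((σ.symm x : Fin E) : ℕ) < k)
  have h3 : ∀ σ : Equiv.Perm (Fin E), (Finset.bipartiteBelow
      (fun (T' : Finset (Fin E)) (σ : Equiv.Perm (Fin E)) =>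
        ∀ x ∈ T', ((σ.symm x : Fin E) : ℕ) < k)
      ((Finset.univ : Finset (Fin E)).powersetCard T.card) σ).card = k.choose T.card := by
    intro σ
    have h4 : Finset.bipartiteBelow
      (fun (T' : Finset (Fin E)) (σ : Equiv.Perm (Fin E)) =>
        ∀ x ∈ T', ((σ.symm x : Fin E) : ℕ) < k)
      ((Finset.univ : Finset (Fin E)).powersetCard T.card) σ
      = (((Finset.univ : Finset (Fin E)).filter (fun t : Fin E => (t : ℕ) < k)).map
          σ.toEmbedding).powersetCard T.card := by
      ext T'
      simp only [Finset.bipartiteBelow, mem_filter, mem_powersetCard, subset_univ, true_and,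
        Finset.subset_iff, mem_map_equiv, mem_univ, implies_true]
      tauto
    rw [h4, Finset.card_powersetCard, Finset.card_map]
    congr 1
    have := Fin.card_filter_val_lt (n := E) (m := k)
    simpa [hk] using this
  calc _ = _ := h2
    _ = _ := by
      rw [Finset.sum_congr rfl (fun σ _ => h3 σ)]
      simp [Fintype.card_perm]

lemma wins_iff (n m N : ℕ) (c : Fin N → Fin n × Fin n → Fin (m * n))
    (σ : Equiv.Perm (Fin (m * n))) (k : ℕ) :
    BingoWinsN n m N c σ k ↔
      σ ∈ (bingoLinesN n m N c).biUnion (fun A => cover (m * n) k A) := by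
  have : ∀ x, (∃ t : Fin (m * n), (t : ℕ) < k ∧ σ t = x) ↔ ((σ.symm x : Fin (m*n)) : ℕ) < k := by
    intro x
    constructor
    · rintro ⟨t, ht, rfl⟩
      simpa using ht
    · intro h
      exact ⟨_, h, by simp⟩
  simp [BingoWinsN, cover, this]

lemma line_nonempty (n : ℕ) (hn : 1 ≤ n) (L : Finset (Fin n × Fin n)) (hL : L ∈ bingoLines n) :
    L.Nonempty := by
  simp only [bingoLines, mem_union, mem_image, mem_univ, true_and, mem_insert,
    mem_singleton] at hL
  rcases hL with (⟨i, rfl⟩ | ⟨i, rfl⟩) | (rfl | rfl)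
  · exact ⟨(i, i), by simp [bingoRow]⟩
  · exact ⟨(i, i), by simp [bingoCol]⟩
  · exact ⟨(⟨0, hn⟩, ⟨0, hn⟩), by simp [bingoDiag]⟩
  · exact ⟨(⟨0, hn⟩, ⟨n - 1, by omega⟩), by simp [bingoAntiDiag]⟩

lemma lineN_nonempty (n m N : ℕ) (hn : 1 ≤ n) (c : Fin N → Fin n × Fin n → Fin (m * n))
    (A : Finset (Fin (m * n))) (hA : A ∈ bingoLinesN n m N c) : A.Nonempty := by
  simp only [bingoLinesN, mem_image, mem_product] at hA
  obtain ⟨q, ⟨_, hq⟩, rfl⟩ := hA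
  exact (line_nonempty n hn _ hq).image _

lemma union_card (E k : ℕ) (hk : k ≤ E) (S : Finset (Finset (Fin E))) :
    ((S.biUnion (fun A => cover E k A)).card : ℝ) / E.factorial =
      ∑ Y ∈ S.powerset.filter (fun Y => Y.Nonempty),
        (-1 : ℝ) ^ (Y.card + 1) * (Nat.choose k (Y.sup id).card : ℝ) /
            (Nat.choose E (Y.sup id).card : ℝ) := by
  classical
  have h := Finset.inclusion_exclusion_card_biUnion S (fun A => cover E k A)
  have h' := congrArg (fun z : ℤ => (z : ℝ)) h
  simp only [Int.cast_natCast, Int.cast_sum, Int.cast_mul, Int.cast_pow, Int.cast_neg,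
    Int.cast_one] at h'
  rw [h', Finset.sum_div, ← Finset.sum_coe_sort (S.powerset.filter (fun Y => Y.Nonempty))]
  refine Finset.sum_congr rfl ?_
  rintro ⟨Y, hY⟩ _
  have h5 : Y.inf' (mem_filter.1 hY).2 (fun A => cover E k A) = cover E k (Y.sup id) := by
    ext σ
    simp only [Finset.mem_inf', cover, mem_filter, mem_univ, true_and, Finset.mem_sup, id]
    constructor
    · rintro h x ⟨A, hA, hx⟩
      exact h A hA x hx
    · intro h A hA x hx
      exact h x ⟨A, hA, hx⟩
  simp only [h5]
  have h6 := cover_mul E k hk (Y.sup id)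
  have h7 : (E.choose (Y.sup id).card : ℝ) ≠ 0 := by
    have : (Y.sup id).card ≤ E := by simpa using Finset.card_le_univ (Y.sup id)
    exact_mod_cast (Nat.choose_pos this).ne'
  have h8 : (E.factorial : ℝ) ≠ 0 := by exact_mod_cast E.factorial_ne_zero
  have h9 : (E.choose (Y.sup id).card : ℝ) * (cover E k (Y.sup id)).card
    = E.factorial * k.choose (Y.sup id).card := by exact_mod_cast h6
  rw [div_eq_div_iff h8 h7]
  linear_combination (-1 : ℝ) ^ (Y.card + 1) * h9

/-- inclusion-exclusion formula for the PMF `P(B_N = k)` in the `N`-player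
`(n,m)`-Bingo game with fixed cards. -/
theorem bingo_multiplayer_pmf (n m N : ℕ) (hn : 1 ≤ n) (hm : n ≤ m) (hN : 1 ≤ N)
    (c : Fin N → Fin n × Fin n → Fin (m * n)) (hc : ∀ a, IsBingoCard n m (c a))
    (B : Equiv.Perm (Fin (m * n)) → ℕ)
    (hB : ∀ σ, IsLeast {k : ℕ | 1 ≤ k ∧ BingoWinsN n m N c σ k} (B σ))
    (k : ℕ) (hk1 : 1 ≤ k) (hk : k ≤ m * n) :
    (((Finset.univ : Finset (Equiv.Perm (Fin (m * n)))).filter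
        (fun σ => B σ = k)).card : ℝ) / (Nat.factorial (m * n)) =
      ∑ Y ∈ (bingoLinesN n m N c).powerset.filter (fun Y => Y.Nonempty),
        (-1 : ℝ) ^ (Y.card + 1) *
          (Nat.choose (k - 1) ((Y.sup id).card - 1) : ℝ) /
            (Nat.choose (m * n) ((Y.sup id).card) : ℝ) := by
  classical
  set S := bingoLinesN n m N c with hS
  obtain ⟨j, rfl⟩ : ∃ j, k = j + 1 := ⟨k - 1, by omega⟩
  have hmono : ∀ a b, a ≤ b → (S.biUnion (fun A => cover (m * n) a A)) ⊆
      (S.biUnion (fun A => cover (m * n) b A)) := by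
    intro a b hab σ
    simp only [mem_biUnion, cover, mem_filter, mem_univ, true_and]
    rintro ⟨A, hA, h⟩
    exact ⟨A, hA, fun x hx => (h x hx).trans_le hab⟩
  have hset : (Finset.univ : Finset (Equiv.Perm (Fin (m * n)))).filter
        (fun σ => B σ = j + 1) = (S.biUnion (fun A => cover (m * n) (j + 1) A)) \
          (S.biUnion (fun A => cover (m * n) j A)) := by
    ext σ
    simp only [mem_filter, mem_univ, true_and, mem_sdiff]
    obtain ⟨⟨b1, b2⟩, b3⟩ := hB σ
    rw [wins_iff] at b2
    constructor
    · intro h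
      rw [h] at b2 b3
      refine ⟨b2, fun hj => ?_⟩
      rcases Nat.eq_zero_or_pos j with h0 | h0
      · subst h0
        simp only [mem_biUnion, cover, mem_filter, mem_univ, true_and] at hj
        obtain ⟨A, hA, hh⟩ := hj
        obtain ⟨x, hx⟩ := lineN_nonempty n m N hn c A hA
        exact absurd (hh x hx) (by omega)
      · have := b3 ⟨h0, (wins_iff n m N c σ j).2 hj⟩
        omega
    · rintro ⟨h1, h2⟩
      have h3 : B σ ≤ j + 1 := b3 ⟨by omega, (wins_iff n m N c σ _).2 h1⟩
      have h4 : ¬ B σ ≤ j := fun hle => h2 (hmono _ _ hle b2)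
      omega
  rw [hset, Finset.cast_card_sdiff (hmono j (j + 1) (by omega)), sub_div,
    union_card _ _ hk, union_card _ _ (by omega), ← Finset.sum_sub_distrib]
  refine Finset.sum_congr rfl fun Y hY => ?_
  obtain ⟨hY1, A, hA⟩ := mem_filter.1 hY
  obtain ⟨x, hx⟩ := lineN_nonempty n m N hn c A (mem_powerset.1 hY1 hA)
  have hpos : 0 < (Y.sup id).card :=
    Finset.card_pos.2 ⟨x, Finset.mem_sup.2 ⟨A, hA, hx⟩⟩
  obtain ⟨t, ht⟩ : ∃ t, (Y.sup id).card = t + 1 := ⟨(Y.sup id).card - 1, by omega⟩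
  rw [ht, Nat.choose_succ_succ]
  push_cast
  ring
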